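/- For a unimodular lattice L of rank n, the square length (v,v) of any characteristic vector v of L is congruent to n modulo 8. -/

import Mathlib

open scoped RealInnerProductSpace

section

open Complex

/-- Splitting a theta series over the residue classes of `N`. -/
theorem jacobiTheta_inv_add_I_mul (N : ℕ) [NeZero N] (hN : Even N) {y : ℝ} (hy : 0 < y) :
    jacobiTheta (1 / N + I / (N ^ 2 * y)) = ((y ^ (1 / 2 : ℝ) : ℝ) : ℂ) *
      ∑ r : Fin N, cexp (Real.pi * I * (r : ℕ) ^ 2 / N) *
        HurwitzZeta.cosKernel (((r : ℕ) / N : ℝ) : UnitAddCircle) y := by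
  have hN0 : (N : ℝ) ≠ 0 := by exact_mod_cast NeZero.ne N
  have hN0' : (N : ℂ) ≠ 0 := by exact_mod_cast NeZero.ne N
  have hy' : (y : ℂ) ≠ 0 := by exact_mod_cast hy.ne'
  have him : 0 < (1 / (N : ℂ) + I / (N ^ 2 * y)).im := by
    have h : 1 / (N : ℂ) + I / (N ^ 2 * y) =
        ((1 / N : ℝ) : ℂ) + ((1 / (N ^ 2 * y) : ℝ) : ℂ) * I := by
      push_cast; ring
    rw [h, add_im, ofReal_im, im_ofReal_mul]
    simp only [I_im, zero_add, mul_one]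
    positivity
  have hs := (hasSum_jacobiTheta₂_term 0 him).summable
  let e : Fin N × ℤ ≃ ℤ := (Equiv.prodComm _ _).trans (Int.divModEquiv N).symm
  have hs' : Summable fun p => jacobiTheta₂_term (e p) 0 (1 / (N : ℂ) + I / (N ^ 2 * y)) :=
    hs.comp_injective e.injective
  rw [jacobiTheta_eq_jacobiTheta₂, jacobiTheta₂, ← e.tsum_eq, Summable.tsum_prod hs', tsum_fintype,
    Finset.mul_sum]
  refine Finset.sum_congr rfl fun r _ => ?_
  have hk := HurwitzZeta.hasSum_int_evenKernel ((r : ℕ) / N : ℝ) (inv_pos.mpr hy)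
  have hfe := HurwitzZeta.evenKernel_functional_equation (((r : ℕ) / N : ℝ) : UnitAddCircle) y⁻¹
  rw [one_div, ← Real.inv_rpow (inv_pos.mpr hy).le, one_div y⁻¹, inv_inv] at hfe
  rw [hfe, ← hasSum_ofReal] at hk
  rw [mul_left_comm, ← ofReal_mul]
  refine (tsum_congr fun m => ?_).trans
    (hk.mul_left (cexp (Real.pi * I * (r : ℕ) ^ 2 / N))).tsum_eq
  obtain ⟨b, hb⟩ := hN
  rw [jacobiTheta₂_term, ofReal_exp, ← Complex.exp_add, Complex.exp_eq_exp_iff_exists_int]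
  refine ⟨m ^ 2 * b + m * r, ?_⟩
  have hb' : (N : ℂ) = 2 * b := by rw [hb]; push_cast; ring
  have hb0 : (b : ℂ) ≠ 0 := by rintro h; simp [hb', h] at hN0'
  simp only [e, Equiv.trans_apply, Equiv.prodComm_apply, Prod.swap_prod_mk,
    Int.divModEquiv_symm_apply]
  push_cast
  rw [hb']
  field_simp
  ring_nf
  simp only [I_sq]
  ring

theorem ofReal_mul_cpow {r : ℝ} (hr : 0 < r) {z : ℂ} (hz : z ≠ 0) (s : ℂ) :
    ((r : ℂ) * z) ^ s = (r : ℂ) ^ s * z ^ s := by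
  have hr' : (r : ℂ) ≠ 0 := by exact_mod_cast hr.ne'
  rw [cpow_def_of_ne_zero (mul_ne_zero hr' hz), cpow_def_of_ne_zero hr', cpow_def_of_ne_zero hz,
    log_ofReal_mul hr hz, ofReal_log hr.le, add_mul, Complex.exp_add]

theorem jacobiTheta_add_natCast_of_even {N : ℕ} (hN : Even N) (τ : ℂ) :
    jacobiTheta (τ + N) = jacobiTheta τ := by
  obtain ⟨b, rfl⟩ := hN
  have h : Function.Periodic jacobiTheta 2 := fun τ => by rw [add_comm, jacobiTheta_two_add]
  simpa [mul_two] using h.nat_mul b τ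

theorem jacobiTheta_functional_equation (τ : ℂ) :
    jacobiTheta τ = 1 / (-I * τ) ^ (1 / 2 : ℂ) * jacobiTheta (-1 / τ) := by
  simp only [jacobiTheta_eq_jacobiTheta₂]
  rw [jacobiTheta₂_functional_equation]
  simp

open Filter Topology in
theorem tendsto_jacobiTheta_of_im_atTop {ι : Type*} {l : Filter ι} {τ : ι → ℂ}
    (h : Tendsto (fun i => (τ i).im) l atTop) :
    Tendsto (fun i => jacobiTheta (τ i)) l (𝓝 1) := by
  have h1 := isBigO_at_im_infty_jacobiTheta_sub_one.comp_tendsto (tendsto_comap_iff.mpr h)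
  have h2 : Tendsto (fun i => Real.exp (-Real.pi * (τ i).im)) l (𝓝 0) :=
    Real.tendsto_exp_atBot.comp (h.const_mul_atTop_of_neg (neg_lt_zero.mpr Real.pi_pos))
  have h3 := (h1.trans_tendsto h2).add_const 1
  simpa using h3

open Filter Topology in
theorem HurwitzZeta.tendsto_cosKernel_atTop (a : UnitAddCircle) :
    Tendsto (fun y => HurwitzZeta.cosKernel a y) atTop (𝓝 1) := by
  obtain ⟨p, hp, h⟩ := HurwitzZeta.isBigO_atTop_cosKernel_sub a
  have h2 : Tendsto (fun y => Real.exp (-p * y)) atTop (𝓝 0) :=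
    Real.tendsto_exp_atBot.comp (tendsto_id.const_mul_atTop_of_neg (neg_lt_zero.mpr hp))
  simpa using (h.trans_tendsto h2).add_const 1

open Filter Topology in
/-- The quadratic Gauss sum `∑ exp (π i r² / N)` for even `N`, including its sign. -/
theorem sum_exp_pi_mul_sq_div (N : ℕ) [NeZero N] (hN : Even N) :
    ∑ r : Fin N, cexp (Real.pi * I * (r : ℕ) ^ 2 / N) =
      (Real.sqrt N : ℂ) * cexp (Real.pi * I / 4) := by
  have hNpos : 0 < (N : ℝ) := by exact_mod_cast NeZero.pos N
  have hN0 : (N : ℂ) ≠ 0 := by exact_mod_cast NeZero.ne N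
  have hsqrt {r : ℝ} (hr : 0 < r) :
      ((r⁻¹ : ℝ) : ℂ) ^ (1 / 2 : ℂ) = ((r ^ (1 / 2 : ℝ) : ℝ) : ℂ)⁻¹ := by
    rw [← ofReal_inv, ← Real.inv_rpow hr.le, ofReal_cpow (inv_pos.mpr hr).le]
    norm_num
  have hlim : Tendsto (fun y : ℝ => ∑ r : Fin N, cexp (Real.pi * I * (r : ℕ) ^ 2 / N) *
      HurwitzZeta.cosKernel (((r : ℕ) / N : ℝ) : UnitAddCircle) y) atTop
      (𝓝 (∑ r : Fin N, cexp (Real.pi * I * (r : ℕ) ^ 2 / N))) := by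
    refine tendsto_finsetSum _ fun r _ => ?_
    have := (continuous_ofReal.tendsto _).comp
      (HurwitzZeta.tendsto_cosKernel_atTop (((r : ℕ) / N : ℝ) : UnitAddCircle))
    simpa using this.const_mul (cexp (Real.pi * I * (r : ℕ) ^ 2 / N))
  have hinv : Tendsto (fun y : ℝ => (y : ℂ)⁻¹) atTop (𝓝 0) := by
    have := (continuous_ofReal.tendsto _).comp tendsto_inv_atTop_zero
    simpa [Function.comp_def] using this
  have hlim' : Tendsto (fun y : ℝ => 1 / (-I * (1 / N + I / (N ^ 2 * y))) ^ (1 / 2 : ℂ) *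
      (1 / (-I / ((y : ℂ)⁻¹ / N - I)) ^ (1 / 2 : ℂ)) * jacobiTheta (I * y - 1 / N)) atTop
      (𝓝 (1 / (-I * (1 / N)) ^ (1 / 2 : ℂ))) := by
    have h1 : Tendsto (fun y : ℝ => -I * (1 / (N : ℂ) + I / (N ^ 2 * y))) atTop
        (𝓝 (-I * (1 / N))) := by
      have := ((hinv.const_mul (I / (N : ℂ) ^ 2)).const_add (1 / (N : ℂ))).const_mul (-I)
      simp only [mul_zero, add_zero] at this
      refine this.congr fun y => ?_
      rw [← div_div]
      rfl
    have h2 : Tendsto (fun y : ℝ => -I / ((y : ℂ)⁻¹ / N - I)) atTop (𝓝 1) := by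
      have := (tendsto_const_nhds (x := -I)).div ((hinv.div_const (N : ℂ)).sub_const I) (by simp)
      simpa [Pi.div_def] using this
    have h3 : Tendsto (fun y : ℝ => jacobiTheta (I * y - 1 / N)) atTop (𝓝 1) := by
      refine tendsto_jacobiTheta_of_im_atTop (tendsto_id.congr fun y => ?_)
      simp [inv_im]
    have hslit : -I * (1 / (N : ℂ)) ∈ slitPlane := by
      right
      simp [NeZero.ne N]
    have h4 := (h1.cpow tendsto_const_nhds hslit (g := fun _ => (1 / 2 : ℂ)))
    have h5 := (h2.cpow tendsto_const_nhds one_mem_slitPlane (g := fun _ => (1 / 2 : ℂ)))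
    have hne : (-I * (1 / (N : ℂ))) ^ (1 / 2 : ℂ) ≠ 0 := by
      rw [Ne, cpow_eq_zero_iff]
      simp [NeZero.ne N]
    have h6 := ((tendsto_const_nhds (x := (1 : ℂ))).div h4 hne).mul
      ((tendsto_const_nhds (x := (1 : ℂ))).div h5 (by simp))
    simpa using h6.mul h3
  have heq : ∀ᶠ y : ℝ in atTop, 1 / (-I * (1 / N + I / (N ^ 2 * y))) ^ (1 / 2 : ℂ) *
      (1 / (-I / ((y : ℂ)⁻¹ / N - I)) ^ (1 / 2 : ℂ)) * jacobiTheta (I * y - 1 / N) =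
      ∑ r : Fin N, cexp (Real.pi * I * (r : ℕ) ^ 2 / N) *
        HurwitzZeta.cosKernel (((r : ℕ) / N : ℝ) : UnitAddCircle) y := by
    filter_upwards [eventually_gt_atTop 0] with y hy
    have hy' : (y : ℂ) ≠ 0 := by exact_mod_cast hy.ne'
    have hz : (y : ℂ)⁻¹ / N - I ≠ 0 := by
      intro h
      have := congrArg im h
      simp [div_im, inv_im] at this
    have hyp : ((y ^ (1 / 2 : ℝ) : ℝ) : ℂ) ≠ 0 := by
      exact_mod_cast (Real.rpow_pos_of_pos hy _).ne'
    have key := jacobiTheta_inv_add_I_mul N hN hy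
    set τ : ℂ := 1 / N + I / (N ^ 2 * y) with hτ
    have hτinv : -1 / τ = I * N / ((y : ℂ)⁻¹ / N - I) := by
      have hτz : τ = I * ((y : ℂ)⁻¹ / N - I) / N := by
        rw [hτ]; field_simp; ring_nf; simp
      rw [hτz, div_eq_div_iff (by simp [hz, hN0]) hz]
      field_simp
      simp
    set w : ℂ := -1 / τ + N with hw
    have hwz : w = (y : ℂ)⁻¹ / ((y : ℂ)⁻¹ / N - I) := by
      rw [hw, hτinv, div_add' _ _ _ hz]
      congr 1
      field_simp
      ring
    have hw1 : -I * w = ((y⁻¹ : ℝ) : ℂ) * (-I / ((y : ℂ)⁻¹ / N - I)) := by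
      rw [hwz]; push_cast; ring
    have hw2 : -1 / w = I * y - 1 / N := by
      rw [hwz]; field_simp; ring
    have hu : -I / ((y : ℂ)⁻¹ / N - I) ≠ 0 := div_ne_zero (by simp) hz
    rw [jacobiTheta_functional_equation, ← jacobiTheta_add_natCast_of_even hN, ← hw,
      jacobiTheta_functional_equation w, hw2, hw1, ofReal_mul_cpow (inv_pos.mpr hy) hu] at key
    rw [hsqrt hy] at key
    refine mul_left_cancel₀ hyp (Eq.trans ?_ key)
    simp only [one_div, mul_inv, inv_inv]
    ring
  rw [← tendsto_nhds_unique (hlim'.congr' heq) hlim]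
  have hr : -I * (1 / (N : ℂ)) = (((N : ℝ)⁻¹ : ℝ) : ℂ) * (-I) := by push_cast; ring
  rw [hr, ofReal_mul_cpow (inv_pos.mpr hNpos) (by simp), Real.sqrt_eq_rpow, one_div, mul_inv]
  congr 1
  · rw [hsqrt hNpos, inv_inv]
  · rw [cpow_def_of_ne_zero (by simp), log_neg_I, ← Complex.exp_neg]
    congr 1
    ring

/-- The function `a ↦ exp (π i a² / N)` on `ZMod N`; it is independent of the representative
of `a` when `N` is even. -/
noncomputable def quadPhase (N : ℕ) (a : ZMod N) : ℂ := cexp (Real.pi * I * (a.val : ℂ) ^ 2 / N)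

theorem quadPhase_intCast {N : ℕ} [NeZero N] (hN : Even N) (k : ℤ) :
    quadPhase N k = cexp (Real.pi * I * (k : ℂ) ^ 2 / N) := by
  have hN0 : (N : ℂ) ≠ 0 := by exact_mod_cast NeZero.ne N
  obtain ⟨b, hb⟩ := hN
  have hb' : (N : ℂ) = 2 * b := by rw [hb]; push_cast; ring
  have hb0 : (b : ℂ) ≠ 0 := by rintro h; simp [hb', h] at hN0
  have hval : (((k : ZMod N).val : ℤ) : ZMod N) = (k : ZMod N) := by simp
  obtain ⟨m, hm⟩ := (ZMod.intCast_eq_intCast_iff_dvd_sub _ _ N).mp hval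
  have hk : (k : ℂ) = (k : ZMod N).val + N * m := by
    have : k = ((k : ZMod N).val : ℤ) + N * m := by linarith
    exact_mod_cast congrArg (Int.cast (R := ℂ)) this
  rw [quadPhase, eq_comm, Complex.exp_eq_exp_iff_exists_int]
  refine ⟨m ^ 2 * b + m * (k : ZMod N).val, ?_⟩
  rw [hk, hb']
  push_cast
  field_simp
  ring

theorem sum_quadPhase {N : ℕ} [NeZero N] (hN : Even N) :
    ∑ a : ZMod N, quadPhase N a = (Real.sqrt N : ℂ) * cexp (Real.pi * I / 4) := by
  rw [← sum_exp_pi_mul_sq_div N hN]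
  cases N with
  | zero => exact absurd rfl (NeZero.ne 0)
  | succ N => rfl

/-- If `f` is `1` on a subgroup `H` and is multiplied by a nontrivial constant under some
translation by `H` on every other coset of `H`, then the sum of `f` is the order of `H`. -/
theorem sum_eq_card_of_mul_on_cosets {A : Type*} [AddCommGroup A] [Fintype A] (H : AddSubgroup A)
    (f : A → ℂ) (hH : ∀ a ∈ H, f a = 1)
    (hc : ∀ a ∉ H, ∃ h ∈ H, ∃ z : ℂ, z ≠ 1 ∧ ∀ h' ∈ H, f (a + h' + h) = z * f (a + h')) :
    ∑ a, f a = Nat.card H := by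
  classical
  have hcard : (Nat.card H : ℂ) ≠ 0 := by exact_mod_cast Nat.card_pos.ne'
  have hcoset (a : A) : ∑ h : H, f (a + h) = if a ∈ H then (Nat.card H : ℂ) else 0 := by
    split_ifs with ha
    · simp [hH _ (H.add_mem ha (SetLike.coe_mem _))]
    · obtain ⟨h, hh, z, hz, hmul⟩ := hc a ha
      have hshift : ∑ h' : H, f (a + h') = z * ∑ h' : H, f (a + h') := by
        rw [Finset.mul_sum, ← Equiv.sum_comp (Equiv.addRight (⟨h, hh⟩ : H))]
        refine Finset.sum_congr rfl fun h' _ => ?_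
        rw [← hmul h' h'.2]
        simp [add_assoc]
      have : (1 - z) * ∑ h' : H, f (a + h') = 0 := by linear_combination hshift
      exact (mul_eq_zero.mp this).resolve_left (sub_ne_zero.mpr hz.symm)
  have htrans : ∑ h : H, ∑ a, f (a + h) = Nat.card H * ∑ a, f a := by
    have h (h : H) : ∑ a, f (a + h) = ∑ a, f a := Equiv.sum_comp (Equiv.addRight (h : A)) f
    simp [h]
  rw [Finset.sum_comm] at htrans
  simp only [hcoset, ← Finset.sum_filter, Finset.sum_const, nsmul_eq_mul] at htrans
  have hfilter : ((Finset.univ.filter (· ∈ H)).card : ℂ) = Nat.card H := by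
    rw [Nat.card_eq_fintype_card, Fintype.card_subtype]
  rw [hfilter] at htrans
  exact (mul_left_cancel₀ hcard htrans).symm

/-- A finite free integral lattice contains an orthogonal family of nonzero vectors indexed by a
basis. -/
theorem exists_orthogonal_family_of_integral {E ι : Type*} [NormedAddCommGroup E]
    [InnerProductSpace ℝ E] [Fintype ι] (L : Submodule ℤ E) (b : Module.Basis ι ℤ L)
    (hint : ∀ x ∈ L, ∀ y ∈ L, ∃ k : ℤ, ⟪x, y⟫ = (k : ℝ)) :
    ∃ u : ι → E, (∀ i, u i ∈ L) ∧ (∀ i, u i ≠ 0) ∧ Pairwise fun i j => ⟪u i, u j⟫ = 0 := by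
  classical
  choose B hB using fun i j => hint (b i) (b i).2 (b j) (b j).2
  let β : LinearMap.BilinForm ℚ (ι → ℚ) := Matrix.toBilin' (Matrix.of fun i j => (B i j : ℚ))
  have hβ : LinearMap.IsSymm β := by
    constructor
    intro x y
    have hsymm (i j) : B i j = B j i := by
      have := (hB i j).symm.trans ((real_inner_comm _ _).trans (hB j i))
      exact_mod_cast this
    simp only [β, Matrix.toBilin'_apply, Matrix.of_apply, RingHom.id_apply]
    rw [Finset.sum_comm]
    refine Finset.sum_congr rfl fun i _ => Finset.sum_congr rfl fun j _ => ?_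
    rw [hsymm j i]
    ring
  have : Invertible (2 : ℚ) := invertibleOfNonzero two_ne_zero
  obtain ⟨w₀, hw₀⟩ := LinearMap.BilinForm.exists_orthogonal_basis hβ
  let σ : Fin (Module.finrank ℚ (ι → ℚ)) ≃ ι := (Fintype.equivFinOfCardEq (by simp)).symm
  let w : Module.Basis ι ℚ (ι → ℚ) := w₀.reindex σ
  have hw (i j) (hij : i ≠ j) : β (w i) (w j) = 0 := by
    simp only [w, Module.Basis.reindex_apply]
    exact hw₀ (σ.symm.injective.ne hij)
  obtain ⟨⟨d, hd⟩, hdw⟩ := IsLocalization.exist_integer_multiples_of_finite (nonZeroDivisors ℤ)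
    (fun p : ι × ι => w p.1 p.2)
  choose c hc using hdw
  have hd0 : (d : ℚ) ≠ 0 := by exact_mod_cast nonZeroDivisors.ne_zero hd
  have hcw (i j) : (c (i, j) : ℚ) = d * w i j := by simpa using hc (i, j)
  let u (i : ι) : L := ∑ j, c (i, j) • b j
  have hu (i j) : ⟪(u i : E), (u j : E)⟫ = ((d * d * β (w i) (w j) : ℚ) : ℝ) := by
    simp only [u, Submodule.coe_sum, Submodule.coe_smul, ← Int.cast_smul_eq_zsmul ℝ,
      sum_inner, inner_sum, real_inner_smul_left, real_inner_smul_right, hB, β,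
      Matrix.toBilin'_apply, Matrix.of_apply, Finset.mul_sum]
    push_cast
    rw [Finset.sum_comm]
    refine Finset.sum_congr rfl fun k _ => Finset.sum_congr rfl fun l _ => ?_
    have h1 := congrArg (Rat.cast (K := ℝ)) (hcw i k)
    have h2 := congrArg (Rat.cast (K := ℝ)) (hcw j l)
    push_cast at h1 h2
    rw [h1, h2]
    ring
  refine ⟨fun i => u i, fun i => (u i).2, fun i hi => ?_, fun i j hij => ?_⟩
  · have hui : u i = 0 := Subtype.ext hi
    have hci (j) : c (i, j) = 0 := by
      have := congrFun (b.repr_sum_self fun j => c (i, j)) j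
      rw [← this, show ∑ j, c (i, j) • b j = 0 from hui]
      simp
    refine w.ne_zero i (funext fun j => ?_)
    have := hcw i j
    simpa [hci, hd0] using this.symm
  · simp [hu, hw i j hij]

/-- Parseval's identity for an orthogonal family of `dim E` nonzero vectors. -/
theorem inner_eq_sum_of_orthogonal {E ι : Type*} [NormedAddCommGroup E]
    [InnerProductSpace ℝ E] [Fintype ι] [FiniteDimensional ℝ E]
    (hcard : Fintype.card ι = Module.finrank ℝ E) {e : ι → E} (he : ∀ i, e i ≠ 0)
    (horth : Pairwise fun i j => ⟪e i, e j⟫ = 0) (x y : E) :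
    ⟪x, y⟫ = ∑ i, ⟪x, e i⟫ * ⟪y, e i⟫ / ⟪e i, e i⟫ := by
  let o (i : ι) : E := (‖e i‖⁻¹ : ℝ) • e i
  have ho : Orthonormal ℝ o := by
    refine ⟨fun i => ?_, fun i j hij => ?_⟩
    · simp [o, norm_smul, he i]
    · simp [o, inner_smul_left, inner_smul_right, horth hij]
  let B := OrthonormalBasis.mk ho (ho.linearIndependent.span_eq_top_of_card_eq_finrank' hcard).ge
  rw [← B.sum_inner_mul_inner x y]
  refine Finset.sum_congr rfl fun i _ => ?_
  have hn : ‖e i‖ ≠ 0 := norm_ne_zero_iff.mpr (he i)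
  simp only [B, OrthonormalBasis.coe_mk, o, real_inner_smul_left, real_inner_smul_right,
    real_inner_self_eq_norm_sq, real_inner_comm (e i) y]
  field_simp

/-- The norm of a characteristic vector `v` of a self-dual lattice modulo `8`, given an orthogonal
family of `dim E` lattice vectors that have even norms and even inner products with `v`. -/
theorem characteristic_norm_mod_eight_of_orthogonal {E ι : Type*} [NormedAddCommGroup E]
    [InnerProductSpace ℝ E] [Fintype ι] [FiniteDimensional ℝ E]
    (hcard : Fintype.card ι = Module.finrank ℝ E) (L : Submodule ℤ E)
    (hint : ∀ x ∈ L, ∀ y ∈ L, ∃ k : ℤ, ⟪x, y⟫ = (k : ℝ))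
    (huni : ∀ x : E, (∀ y ∈ L, ∃ k : ℤ, ⟪x, y⟫ = (k : ℝ)) → x ∈ L)
    (v : E) (hv : ∀ x ∈ L, ∃ k : ℤ, ⟪v, x⟫ - ⟪x, x⟫ = 2 * (k : ℝ))
    {e : ι → E} (heL : ∀ i, e i ∈ L) (he : ∀ i, e i ≠ 0)
    (horth : Pairwise fun i j => ⟪e i, e j⟫ = 0)
    (N : ι → ℕ) (hN : ∀ i, ⟪e i, e i⟫ = (N i : ℝ)) (hNeven : ∀ i, Even (N i))
    (k₀ : ι → ℤ) (hk₀ : ∀ i, ⟪v, e i⟫ = 2 * (k₀ i : ℝ)) :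
    ∃ k : ℤ, ⟪v, v⟫ - (Fintype.card ι : ℝ) = 8 * (k : ℝ) := by
  classical
  have hNpos (i) : 0 < (N i : ℝ) := by rw [← hN]; exact real_inner_self_pos.mpr (he i)
  have hNz (i) : NeZero (N i) := ⟨by exact_mod_cast (hNpos i).ne'⟩
  have parseval := inner_eq_sum_of_orthogonal hcard he horth
  simp only [hN] at parseval
  -- the dual of the sublattice spanned by the `e i`, in coordinates
  let φ : (ι → ℤ) →+ E := AddMonoidHom.mk' (fun k => ∑ i, ((k i : ℝ) / N i) • e i) fun k l => by
    simp [add_div, add_smul, Finset.sum_add_distrib]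
  have hφe (k i) : ⟪φ k, e i⟫ = k i := by
    simp only [φ, AddMonoidHom.mk'_apply, sum_inner, real_inner_smul_left]
    rw [Finset.sum_eq_single i (fun j _ hj => by rw [horth hj, mul_zero]) (by simp), hN,
      div_mul_cancel₀ _ (hNpos i).ne']
  have hφ_of {x : E} {k : ι → ℤ} (h : ∀ i, ⟪x, e i⟫ = k i) : φ k = x := by
    refine ext_inner_right ℝ fun y => ?_
    simp [parseval _ y, hφe, h]
  have hφv : φ k₀ = (1 / 2 : ℝ) • v :=
    hφ_of fun i => by rw [real_inner_smul_left, hk₀]; ring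
  have hφ_surj {y : E} (hy : y ∈ L) : ∃ k, φ k = y := by
    choose k hk using fun i => hint y hy (e i) (heL i)
    exact ⟨k, hφ_of hk⟩
  let pr : (ι → ℤ) →+ (∀ i, ZMod (N i)) := AddMonoidHom.mk' (fun k i => (k i : ZMod (N i)))
    fun k l => by ext i; simp
  have hpr_surj (a) : ∃ k, pr k = a :=
    ⟨fun i => (a i).val, by ext i; simp [pr]⟩
  let H : AddSubgroup (∀ i, ZMod (N i)) := (L.toAddSubgroup.comap φ).map pr
  have hH_of {k} (h : φ k ∈ L) : pr k ∈ H := ⟨k, h, rfl⟩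
  let g (a : ∀ i, ZMod (N i)) : ℂ := ∏ i, quadPhase (N i) (a i)
  have hg (k) : g (pr k) = cexp (Real.pi * I * (⟪φ k, φ k⟫ : ℝ)) := by
    have hphase (i : ι) : quadPhase (N i) (pr k i) = cexp (Real.pi * I * (k i : ℂ) ^ 2 / N i) :=
      quadPhase_intCast (hNeven i) (k i)
    rw [parseval (φ k)]
    simp only [g, hphase, ← Complex.exp_sum, hφe]
    congr 1
    push_cast
    rw [Finset.mul_sum]
    exact Finset.sum_congr rfl fun i _ => by ring
  let f (a : ∀ i, ZMod (N i)) : ℂ :=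
    g (a + pr k₀) * cexp (-(Real.pi * I * (⟪v, v⟫ : ℝ) / 4))
  have hf (k) : f (pr k) = cexp (Real.pi * I * (⟪φ k, φ k⟫ + ⟪v, φ k⟫ : ℝ)) := by
    simp only [f]
    rw [← map_add, hg, ← Complex.exp_add, map_add, hφv]
    congr 1
    simp only [inner_add_left, inner_add_right, real_inner_smul_left, real_inner_smul_right,
      real_inner_comm v (φ k)]
    push_cast
    ring
  have hchar {y : E} (hy : y ∈ L) : ∃ m : ℤ, ⟪y, y⟫ + ⟪v, y⟫ = 2 * (m : ℝ) := by
    obtain ⟨m, hm⟩ := hv y hy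
    obtain ⟨l, hl⟩ := hint y hy y hy
    exact ⟨m + l, by push_cast; linarith⟩
  have hsum : ∑ a, f a = Nat.card H := by
    refine sum_eq_card_of_mul_on_cosets H f ?_ fun a ha => ?_
    · rintro _ ⟨k, hk, rfl⟩
      obtain ⟨m, hm⟩ := hchar hk
      rw [hf, hm, Complex.exp_eq_one_iff]
      exact ⟨m, by push_cast; ring⟩
    · obtain ⟨k, rfl⟩ := hpr_surj a
      have hk : ¬ φ k ∈ L := fun h => ha (hH_of h)
      obtain ⟨y, hy, hky⟩ : ∃ y ∈ L, ¬ ∃ m : ℤ, ⟪φ k, y⟫ = (m : ℝ) := by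
        by_contra! h
        exact hk (huni _ fun y hy => by simpa using h y hy)
      obtain ⟨l, rfl⟩ := hφ_surj hy
      refine ⟨pr l, hH_of hy, cexp (2 * Real.pi * I * (⟪φ k, φ l⟫ : ℝ)), fun h => hky ?_, ?_⟩
      · obtain ⟨m, hm⟩ := Complex.exp_eq_one_iff.mp h
        rw [mul_comm] at hm
        exact ⟨m, by exact_mod_cast mul_right_cancel₀ Complex.two_pi_I_ne_zero hm⟩
      · rintro _ ⟨k', hk', rfl⟩
        obtain ⟨m, hm⟩ := hchar hy
        obtain ⟨m', hm'⟩ := hint _ hk' _ hy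
        rw [← map_add, ← map_add, hf, hf, ← Complex.exp_add, Complex.exp_eq_exp_iff_exists_int]
        refine ⟨m + m', ?_⟩
        have hexp : ⟪φ (k + k' + l), φ (k + k' + l)⟫ + ⟪v, φ (k + k' + l)⟫ =
            2 * ⟪φ k, φ l⟫ + (⟪φ (k + k'), φ (k + k')⟫ + ⟪v, φ (k + k')⟫) + 2 * (m + m') := by
          simp only [map_add, inner_add_left, inner_add_right]
          linarith [real_inner_comm (φ k) (φ l), real_inner_comm (φ k') (φ l)]
        rw [hexp]
        push_cast
        ring
  have hgsum : ∑ a, g a = (∏ i, Real.sqrt (N i) : ℝ) * cexp (Real.pi * I * Fintype.card ι / 4) := by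
    simp only [g]
    rw [← Fintype.prod_sum]
    simp only [sum_quadPhase (hNeven _), Finset.prod_mul_distrib, Finset.prod_const,
      ← Complex.exp_nat_mul, Finset.card_univ]
    push_cast
    congr 2
    ring
  have hfg : ∑ a, f a = (∑ a, g a) * cexp (-(Real.pi * I * (⟪v, v⟫ : ℝ) / 4)) := by
    rw [Finset.sum_mul, ← Equiv.sum_comp (Equiv.addRight (pr k₀)) fun a => g a * _]
    rfl
  rw [hsum, hgsum, mul_assoc, ← Complex.exp_add] at hfg
  set θ : ℝ := Real.pi * (Fintype.card ι - ⟪v, v⟫) / 4 with hθ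
  have hexp : Real.pi * I * Fintype.card ι / 4 + -(Real.pi * I * (⟪v, v⟫ : ℝ) / 4) = θ * I := by
    rw [hθ]; push_cast; ring
  rw [hexp] at hfg
  have hprod : 0 < ∏ i, Real.sqrt (N i) :=
    Finset.prod_pos fun i _ => Real.sqrt_pos.mpr (hNpos i)
  have hnorm : (Nat.card H : ℝ) = ∏ i, Real.sqrt (N i) := by
    have := congrArg norm hfg
    rwa [norm_mul, Complex.norm_exp_ofReal_mul_I, mul_one, Complex.norm_natCast,
      Complex.norm_real, Real.norm_of_nonneg hprod.le] at this
  have hone : cexp (θ * I) = 1 := by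
    rw [← hnorm] at hfg hprod
    have h0 : (Nat.card H : ℂ) ≠ 0 := by exact_mod_cast hprod.ne'
    refine mul_left_cancel₀ h0 ?_
    rw [mul_one]
    exact_mod_cast hfg.symm
  obtain ⟨m, hm⟩ := Complex.exp_eq_one_iff.mp hone
  refine ⟨-m, ?_⟩
  have hθm : θ = m * (2 * Real.pi) := by
    have : (θ : ℂ) = m * (2 * Real.pi) := mul_right_cancel₀ I_ne_zero (by rw [hm]; ring)
    exact_mod_cast this
  have := Real.pi_ne_zero
  rw [hθ] at hθm
  field_simp at hθm
  push_cast
  linarith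

end

/-- For a unimodular lattice `L` of rank `n` in `ℝⁿ`, the square length of any
characteristic vector is congruent to `n` modulo `8`. -/
theorem characteristic_norm_mod_eight {n : ℕ}
    (L : Submodule ℤ (EuclideanSpace ℝ (Fin n)))
    (hint : ∀ x ∈ L, ∀ y ∈ L, ∃ k : ℤ, ⟪x, y⟫ = (k : ℝ))
    (hfree : Module.Free ℤ ↥L)
    (hrank : Module.finrank ℤ ↥L = n)
    (huni : ∀ x : EuclideanSpace ℝ (Fin n),
      (∀ y ∈ L, ∃ k : ℤ, ⟪x, y⟫ = (k : ℝ)) ↔ x ∈ L)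
    (v : EuclideanSpace ℝ (Fin n))
    (hv : ∀ x ∈ L, ∃ k : ℤ, ⟪v, x⟫ - ⟪x, x⟫ = 2 * (k : ℝ)) :
    ∃ k : ℤ, ⟪v, v⟫ - (n : ℝ) = 8 * (k : ℝ) := by
  rcases Nat.eq_zero_or_pos n with rfl | hn
  · exact ⟨0, by simp [Subsingleton.elim v 0]⟩
  have hfin : Module.Finite ℤ L := Module.finite_of_finrank_pos (by rwa [hrank])
  obtain ⟨u, huL, hu0, horth⟩ :=
    exists_orthogonal_family_of_integral L (Module.finBasisOfFinrankEq ℤ L hrank) hint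
  choose m hm using fun i => hint (u i) (huL i) (u i) (huL i)
  choose c hc using fun i => hv (u i) (huL i)
  have hm0 (i) : 0 ≤ m i := by
    have : (0 : ℝ) ≤ m i := hm i ▸ real_inner_self_nonneg
    exact_mod_cast this
  have h2 (i) : (2 : ℤ) • u i = (2 : ℝ) • u i := by rw [← Int.cast_smul_eq_zsmul ℝ]; norm_num
  have key := characteristic_norm_mod_eight_of_orthogonal (ι := Fin n) (by simp) L hint
    (fun x => (huni x).mp) v hv (e := fun i => (2 : ℤ) • u i)
    (fun i => L.smul_mem _ (huL i)) (fun i => by simp only [h2]; simp [hu0 i])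
    (fun i j hij => by simp [h2, real_inner_smul_left, real_inner_smul_right, horth hij])
    (fun i => 4 * (m i).toNat) (fun i => ?_) (fun i => ⟨2 * (m i).toNat, by ring⟩)
    (fun i => 2 * c i + m i) (fun i => ?_)
  · simpa using key
  · have : (((m i).toNat : ℤ) : ℝ) = m i := by rw [Int.toNat_of_nonneg (hm0 i)]
    simp only [h2, real_inner_smul_left, real_inner_smul_right, hm]
    push_cast at this ⊢
    rw [this]
    ring
  · simp only [h2, real_inner_smul_right]
    push_cast
    linarith [hc i, hm i]
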